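/- arXiv:2011.09909 — 2 statements merged into one kernel-verified Lean document; each statement's English description precedes it below -/
import Mathlib

section
/- Let H be a nonzero 2D harmonic fourth-order tensor. Then the equation H = h∗h, i.e. H i j k l = h i j · h k l − ½(Σₚq (h p q)²)·J i j k l for all indices, has exactly two solutions h among symmetric traceless 2×2 real matrices, and these two solutions are opposite to each other: if h₁ and h₂ are both solutions then h₂ = h₁ or h₂ = −h₁. -/
open Finset

noncomputable section

/-- A fourth-order tensor on `ℝ²`. -/
abbrev Tens4 := Fin 2 → Fin 2 → Fin 2 → Fin 2 → ℝ

/-- Kronecker delta on `Fin 2`. -/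
def kdelta (i j : Fin 2) : ℝ := if i = j then 1 else 0

/-- The isotropic fourth-order tensor `J`. -/
def Jten (i j k l : Fin 2) : ℝ :=
  (kdelta i k * kdelta j l + kdelta i l * kdelta j k) / 2 - kdelta i j * kdelta k l / 2

/-- A 2D elasticity tensor: minor and major index symmetries. -/
def IsElas (C : Tens4) : Prop :=
  (∀ i j k l, C i j k l = C j i k l) ∧ (∀ i j k l, C i j k l = C i j l k) ∧
    (∀ i j k l, C i j k l = C k l i j)

/-- Dilatation tensor `d(C)ᵢⱼ = Σₖ C k k i j`. -/
def dil (C : Tens4) (i j : Fin 2) : ℝ := ∑ k, C k k i j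

/-- Voigt tensor `v(C)ᵢⱼ = Σₖ C k i k j`. -/
def voigt (C : Tens4) (i j : Fin 2) : ℝ := ∑ k, C k i k j

/-- Shear modulus `μ(C)`. -/
def muC (C : Tens4) : ℝ := (2 * ∑ i, voigt C i i - ∑ i, dil C i i) / 8

/-- 2D bulk modulus `κ(C)`. -/
def kappaC (C : Tens4) : ℝ := (∑ i, dil C i i) / 4

/-- Deviatoric part `d'(C)` of the dilatation tensor. -/
def devC (C : Tens4) (i j : Fin 2) : ℝ := dil C i j - (∑ k, dil C k k) / 2 * kdelta i j

/-- Harmonic (fourth-order) part `H(C)` of the elasticity tensor. -/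
def harmC (C : Tens4) (i j k l : Fin 2) : ℝ :=
  C i j k l - 2 * muC C * Jten i j k l - kappaC C * kdelta i j * kdelta k l
    - (kdelta i j * devC C k l + devC C i j * kdelta k l) / 2

/-- A 2D harmonic fourth-order tensor: totally symmetric (invariant under all
permutations of its four indices) and traceless. -/
def IsHarmonic (H : Tens4) : Prop :=
  (∀ (σ : Equiv.Perm (Fin 4)) (v : Fin 4 → Fin 2),
      H (v (σ 0)) (v (σ 1)) (v (σ 2)) (v (σ 3)) = H (v 0) (v 1) (v 2) (v 3)) ∧
    (∀ i j : Fin 2, ∑ k, H k k i j = 0)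

/-- A symmetric traceless (deviatoric) `2×2` real matrix. -/
def IsDev (h : Matrix (Fin 2) (Fin 2) ℝ) : Prop :=
  (∀ i j, h i j = h j i) ∧ h 0 0 + h 1 1 = 0

/-- The harmonic square `h ∗ h` of a symmetric traceless `2×2` matrix `h`. -/
def hsq (h : Matrix (Fin 2) (Fin 2) ℝ) (i j k l : Fin 2) : ℝ :=
  h i j * h k l - (∑ p, ∑ q, (h p q) ^ 2) / 2 * Jten i j k l

/-!
In the plane, a harmonic tensor of order `n` is the real part of a complex multiple of the `n`-th
tensor power of the isotropic vector `e = (1, -i)`, `e · e = 0`: a deviator is `Re (z e ⊗ e)`, a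
fourth-order harmonic tensor is `½ Re (w e ⊗ e ⊗ e ⊗ e)`. Multiplying two real parts,
`Re a Re b = ½ Re (a b) + ½ Re (a conj b)`, the second term for `h = Re (z e ⊗ e)` is
`|z|² J`, which is exactly what the harmonic square removes. Hence `h ∗ h` has parameter `z²`, and a
nonzero complex number has exactly two square roots, opposite to each other.
-/

section ComplexParametrization

open Complex ComplexConjugate

/-- The isotropic vector `e = (1, -i)` of `ℂ²`. With this choice of sign, `Re (z e ⊗ e)` has first
row `(Re z, Im z)`. -/
def isotropicVec : Fin 2 → ℂ := ![1, -I]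

/-- The symmetric traceless matrix with complex parameter `z`, which is `Re (z e ⊗ e)` for `e` the
isotropic vector. -/
def deviator (z : ℂ) : Matrix (Fin 2) (Fin 2) ℝ := !![z.re, z.im; z.im, -z.re]

/-- The fourth-order harmonic tensor `½ Re (w e ⊗ e ⊗ e ⊗ e)` with complex parameter `w`, for `e`
the isotropic vector. The factor `½` makes the harmonic square correspond to `z ↦ z ^ 2`. -/
def harmonicTensor (w : ℂ) : Tens4 := fun i j k l =>
  (w * (isotropicVec i * isotropicVec j * (isotropicVec k * isotropicVec l))).re / 2

theorem deviator_apply (z : ℂ) (i j : Fin 2) :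
    deviator z i j = (z * (isotropicVec i * isotropicVec j)).re := by
  fin_cases i <;> fin_cases j <;> simp [deviator, isotropicVec]

theorem deviator_neg (z : ℂ) : deviator (-z) = -deviator z := by
  simp [deviator]

theorem deviator_injective : Function.Injective deviator := fun _ _ h =>
  Complex.ext (congrFun₂ h 0 0) (congrFun₂ h 0 1)

theorem isDev_iff_exists_deviator {h : Matrix (Fin 2) (Fin 2) ℝ} :
    IsDev h ↔ ∃ z, deviator z = h := by
  constructor
  · rintro ⟨hsymm, htrace⟩
    refine ⟨⟨h 0 0, h 0 1⟩, ?_⟩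
    have hdiag : h 1 1 = -h 0 0 := eq_neg_of_add_eq_zero_right htrace
    calc deviator ⟨h 0 0, h 0 1⟩
        = !![h 0 0, h 0 1; h 1 0, h 1 1] := by rw [hsymm 1 0, hdiag, deviator]
      _ = h := (Matrix.eta_fin_two h).symm
  · rintro ⟨z, rfl⟩
    simp [IsDev, deviator, Fin.forall_fin_two]

theorem isDev_deviator (z : ℂ) : IsDev (deviator z) :=
  isDev_iff_exists_deviator.2 ⟨z, rfl⟩

theorem sum_sq_deviator (z : ℂ) : ∑ p, ∑ q, deviator z p q ^ 2 = 2 * normSq z := by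
  simp only [deviator, Fin.sum_univ_two, Matrix.of_apply, Matrix.cons_val_zero,
    Matrix.cons_val_one, normSq_apply]
  ring

theorem harmonicTensor_zero : harmonicTensor 0 = 0 := by
  ext i j k l
  simp [harmonicTensor]

theorem harmonicTensor_injective : Function.Injective harmonicTensor := by
  intro w w' h
  have hre : harmonicTensor w 0 0 0 0 = harmonicTensor w' 0 0 0 0 := by rw [h]
  have him : harmonicTensor w 0 0 0 1 = harmonicTensor w' 0 0 0 1 := by rw [h]
  exact Complex.ext (by simpa [harmonicTensor, isotropicVec] using hre)
    (by simpa [harmonicTensor, isotropicVec] using him)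

namespace IsHarmonic

variable {H : Tens4} (hH : IsHarmonic H)
include hH

theorem swap_zero_one (i j k l : Fin 2) : H j i k l = H i j k l :=
  hH.1 (Equiv.swap 0 1) ![i, j, k, l]

theorem swap_one_two (i j k l : Fin 2) : H i k j l = H i j k l :=
  hH.1 (Equiv.swap 1 2) ![i, j, k, l]

theorem swap_two_three (i j k l : Fin 2) : H i j l k = H i j k l :=
  hH.1 (Equiv.swap 2 3) ![i, j, k, l]

theorem apply_one_one (k l : Fin 2) : H 1 1 k l = -H 0 0 k l := by
  have htrace := hH.2 k l
  rw [Fin.sum_univ_two] at htrace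
  exact eq_neg_of_add_eq_zero_right htrace

theorem exists_harmonicTensor_eq : ∃ w, harmonicTensor w = H := by
  refine ⟨⟨2 * H 0 0 0 0, 2 * H 0 0 0 1⟩, ?_⟩
  ext i j k l
  -- Moving the indices `1` to the left and cancelling them in pairs reduces every component to
  -- `± H 0 0 0 0` or `± H 1 0 0 0`.
  fin_cases i <;> fin_cases j <;> fin_cases k <;> fin_cases l <;>
    simp [harmonicTensor, isotropicVec, hH.swap_zero_one 1 0, hH.swap_one_two _ 1 0,
      hH.swap_two_three _ _ 1 0, hH.apply_one_one, neg_div]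

end IsHarmonic

theorem re_mul_re (a b : ℂ) : a.re * b.re = ((a * b).re + (a * conj b).re) / 2 := by
  simp only [mul_re, conj_re, conj_im]
  ring

theorem Jten_eq_re (i j k l : Fin 2) :
    Jten i j k l =
      (isotropicVec i * isotropicVec j * conj (isotropicVec k * isotropicVec l)).re / 2 := by
  fin_cases i <;> fin_cases j <;> fin_cases k <;> fin_cases l <;>
    norm_num [Jten, kdelta, isotropicVec]

theorem hsq_deviator (z : ℂ) : hsq (deviator z) = harmonicTensor (z ^ 2) := by
  ext i j k l
  set a := isotropicVec i * isotropicVec j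
  set b := isotropicVec k * isotropicVec l
  have hprod : z * a * (z * b) = z ^ 2 * (a * b) := by ring
  have hconj : (z * a * conj (z * b)).re = normSq z * (a * conj b).re := by
    rw [map_mul, mul_mul_mul_comm, mul_conj, re_ofReal_mul]
  calc hsq (deviator z) i j k l
      = (z * a).re * (z * b).re - normSq z * ((a * conj b).re / 2) := by
        rw [hsq, sum_sq_deviator, deviator_apply, deviator_apply, Jten_eq_re,
          mul_div_cancel_left₀ _ two_ne_zero]
    _ = (z ^ 2 * (a * b)).re / 2 := by
        rw [re_mul_re, hprod, hconj]
        ring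
    _ = harmonicTensor (z ^ 2) i j k l := rfl

theorem harmonicTensor_eq_hsq_deviator_iff (w z : ℂ) :
    (∀ i j k l, harmonicTensor w i j k l = hsq (deviator z) i j k l) ↔ w = z ^ 2 := by
  simp only [hsq_deviator, ← funext_iff, harmonicTensor_injective.eq_iff]

end ComplexParametrization

/-- For a nonzero 2D harmonic fourth-order tensor `H`, the equation
`H = h ∗ h` has exactly two solutions among symmetric traceless `2×2` matrices,
and they are opposite to each other. -/
theorem harmonic_square_root_two_opposite_solutions (H : Tens4) (hH : IsHarmonic H)
    (hne : H ≠ 0) :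
    ∃ h₁ : Matrix (Fin 2) (Fin 2) ℝ,
      (IsDev h₁ ∧ ∀ i j k l, H i j k l = hsq h₁ i j k l) ∧
      (IsDev (-h₁) ∧ ∀ i j k l, H i j k l = hsq (-h₁) i j k l) ∧
      h₁ ≠ -h₁ ∧
      ∀ h : Matrix (Fin 2) (Fin 2) ℝ,
        (IsDev h ∧ ∀ i j k l, H i j k l = hsq h i j k l) → h = h₁ ∨ h = -h₁ := by
  obtain ⟨w, rfl⟩ := hH.exists_harmonicTensor_eq
  obtain ⟨z, rfl⟩ : ∃ z, z ^ 2 = w := IsAlgClosed.exists_pow_nat_eq w two_pos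
  have hz : z ≠ 0 := by
    rintro rfl
    exact hne (by rw [zero_pow two_ne_zero, harmonicTensor_zero])
  refine ⟨deviator z, ?_, ?_, ?_, ?_⟩
  · exact ⟨isDev_deviator z, (harmonicTensor_eq_hsq_deviator_iff _ _).2 rfl⟩
  · rw [← deviator_neg]
    exact ⟨isDev_deviator (-z), (harmonicTensor_eq_hsq_deviator_iff _ _).2 (neg_sq z).symm⟩
  · rw [← deviator_neg]
    exact deviator_injective.ne (self_ne_neg.2 hz)
  · rintro h ⟨hdev, hsol⟩
    obtain ⟨z', rfl⟩ := isDev_iff_exists_deviator.1 hdev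
    have hroot : z ^ 2 = z' ^ 2 := (harmonicTensor_eq_hsq_deviator_iff _ _).1 hsol
    rw [← deviator_neg, deviator_injective.eq_iff, deviator_injective.eq_iff]
    exact sq_eq_sq_iff_eq_or_eq_neg.1 hroot.symm
end
end

section
/- (Upper bound of the distance to the orthotropic symmetry class.) Let C be a 2D elasticity tensor with d'(C) ≠ 0, set I₂ = Σᵢⱼ (d'(C) i j)², J₂ = Σᵢⱼₖₗ (H(C) i j k l)², K₃ = Σᵢⱼₖₗ d(C) i j · H(C) i j k l · d(C) k l, and define C₀ i j k l = 2μ(C)·J i j k l + κ(C)·δ i j · δ k l + ½(δ i j · d'(C) k l + d'(C) i j · δ k l) + (2K₃/I₂²)·(d'(C) i j · d'(C) k l − ½·I₂·J i j k l). Then C₀ is an orthotropic 2D elasticity tensor and Σᵢⱼₖₗ (C i j k l − C₀ i j k l)² = (J₂·I₂² − 2K₃²)/I₂². Consequently the distance from C to the set of orthotropic 2D elasticity tensors (in the norm whose square is the sum of squared components) is at most Δ = √(J₂·I₂² − 2K₃²)/I₂. -/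
open Finset

noncomputable section

/-- Rotation matrix of angle `θ`. -/
def rot (θ : ℝ) : Matrix (Fin 2) (Fin 2) ℝ :=
  !![Real.cos θ, -Real.sin θ; Real.sin θ, Real.cos θ]

/-- Action `g ⋆ C` of a `2×2` matrix `g` on a fourth-order tensor `C`. -/
def act (g : Matrix (Fin 2) (Fin 2) ℝ) (C : Tens4) (i j k l : Fin 2) : ℝ :=
  ∑ p, ∑ q, ∑ r, ∑ s, g i p * g j q * g k r * g l s * C p q r s

/-- `C` is orthotropic: in some rotated basis, the components `1112` and `1222` vanish. -/
def IsOrtho (C : Tens4) : Prop :=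
  ∃ θ : ℝ, act (rot θ) C 0 0 0 1 = 0 ∧ act (rot θ) C 0 1 1 1 = 0

/-- Invariant `I₂ = ‖d'(C)‖²`. -/
def I2 (C : Tens4) : ℝ := ∑ i, ∑ j, (devC C i j) ^ 2

/-- Invariant `J₂ = ‖H(C)‖²`. -/
def J2 (C : Tens4) : ℝ := ∑ i, ∑ j, ∑ k, ∑ l, (harmC C i j k l) ^ 2

/-- Invariant `K₃ = d(C) : H(C) : d(C)`. -/
def K3 (C : Tens4) : ℝ :=
  ∑ i, ∑ j, ∑ k, ∑ l, dil C i j * harmC C i j k l * dil C k l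

/-!
Write `D = d'(C)`, a symmetric traceless matrix, and `H = H(C)`. The tensor `C₀` is obtained from
`C` by replacing `H` with its orthogonal projection onto the line spanned by
`P = H(D ⊗ D) = D ⊗ D - (I₂ / 2) J`. Since `d(H) = 0` and `μ(H) = 0`, the tensor `H` is orthogonal
to `J` and to every tensor `δ ⊗ A` or `A ⊗ δ`; hence `⟨H, P⟩ = ⟨H, D ⊗ D⟩ = K₃`, and likewise
`⟨P, P⟩ = ⟨P, D ⊗ D⟩ = I₂² / 2`, so that the squared distance is Pythagoras' theorem. A rotation
that diagonalizes `D` fixes `J` and `δ`, which makes every linear combination of `J`, `δ ⊗ δ`,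
`δ ⊗ D + D ⊗ δ` and `D ⊗ D` orthotropic, `C₀` among them.
-/

theorem bilin_self_sub_proj {K V : Type*} [Field K] [AddCommGroup V] [Module K V]
    {B : LinearMap.BilinForm K V} (hB : B.IsSymm) (x : V) {y : V} (hy : B y y ≠ 0) :
    B (x - (B x y / B y y) • y) (x - (B x y / B y y) • y) = B x x - B x y ^ 2 / B y y := by
  simp only [map_sub, map_smul, LinearMap.sub_apply, LinearMap.smul_apply, smul_eq_mul, hB.eq y x]
  field_simp
  ring

theorem exists_mul_sin_add_mul_cos_eq_zero (a b : ℝ) :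
    ∃ φ : ℝ, a * Real.sin φ + b * Real.cos φ = 0 := by
  set z : ℂ := ⟨a, b⟩
  have hre : ‖z‖ * Real.cos z.arg = a := Complex.norm_mul_cos_arg z
  have him : ‖z‖ * Real.sin z.arg = b := Complex.norm_mul_sin_arg z
  refine ⟨-z.arg, ?_⟩
  rw [Real.sin_neg, Real.cos_neg, ← hre, ← him]
  ring

/-- The squared Frobenius norm of a matrix; `I₂(C)` is its value at `d'(C)`. -/
def frobSq {m n : Type*} [Fintype m] [Fintype n] (A : m → n → ℝ) : ℝ := ∑ i, ∑ j, A i j ^ 2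

theorem frobSq_pos {m n : Type*} [Fintype m] [Fintype n] {A : m → n → ℝ} (hA : A ≠ 0) :
    0 < frobSq A := by
  obtain ⟨i, hi⟩ := Function.ne_iff.mp hA
  obtain ⟨j, hij⟩ := Function.ne_iff.mp hi
  exact sum_pos' (fun _ _ => sum_nonneg fun _ _ => sq_nonneg _)
    ⟨i, mem_univ i, sum_pos' (fun _ _ => sq_nonneg _) ⟨j, mem_univ j, sq_pos_of_ne_zero hij⟩⟩

theorem I2_pos {C : Tens4} (hd : devC C ≠ 0) : 0 < I2 C := frobSq_pos hd

/-- A second-order tensor on `ℝ²`. -/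
abbrev Tens2 := Fin 2 → Fin 2 → ℝ

theorem kdelta_comm (i j : Fin 2) : kdelta i j = kdelta j i := by
  simp only [kdelta, eq_comm]

/-- The tensor product `(A ⊗ B) i j k l = A i j * B k l` of second-order tensors, bundled as a
bilinear map. -/
def dyad : Tens2 →ₗ[ℝ] Tens2 →ₗ[ℝ] Tens4 :=
  LinearMap.mk₂ ℝ (fun A B i j k l => A i j * B k l)
    (fun _ _ _ => by ext; simp [add_mul]) (fun _ _ _ => by ext; simp [mul_assoc])
    (fun _ _ _ => by ext; simp [mul_add]) (fun _ _ _ => by ext; simp [mul_left_comm])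

theorem dyad_apply (A B : Tens2) (i j k l : Fin 2) : dyad A B i j k l = A i j * B k l := rfl

/-- The full contraction of fourth-order tensors; its quadratic form is the squared norm in which
the distance to the orthotropic class is measured. -/
def tensInner : LinearMap.BilinForm ℝ Tens4 :=
  LinearMap.mk₂ ℝ (fun S T => ∑ i, ∑ j, ∑ k, ∑ l, S i j k l * T i j k l)
    (fun _ _ _ => by simp only [Pi.add_apply, add_mul, sum_add_distrib])
    (fun _ _ _ => by simp only [Pi.smul_apply, smul_eq_mul, mul_assoc, mul_sum])
    (fun _ _ _ => by simp only [Pi.add_apply, mul_add, sum_add_distrib])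
    (fun _ _ _ => by simp only [Pi.smul_apply, smul_eq_mul, mul_left_comm, mul_sum])

theorem tensInner_apply (S T : Tens4) :
    tensInner S T = ∑ i, ∑ j, ∑ k, ∑ l, S i j k l * T i j k l := rfl

theorem tensInner_self (T : Tens4) : tensInner T T = ∑ i, ∑ j, ∑ k, ∑ l, T i j k l ^ 2 := by
  simp only [tensInner_apply, sq]

theorem tensInner_isSymm : tensInner.IsSymm :=
  ⟨fun S T => by simp only [tensInner_apply, mul_comm]⟩

theorem tensInner_dyad_self (A B : Tens2) :
    tensInner (dyad A B) (dyad A B) = frobSq A * frobSq B := by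
  simp_rw [tensInner_self, dyad_apply, mul_pow, ← mul_sum, ← sum_mul, frobSq]

theorem tensInner_dyad_kdelta_left (T : Tens4) (B : Tens2) :
    tensInner T (dyad kdelta B) = ∑ k, ∑ l, dil T k l * B k l := by
  simp only [tensInner_apply, dyad_apply, dil, kdelta, Fin.sum_univ_two, ↓reduceIte,
    zero_ne_one, one_ne_zero]
  ring

theorem dil_sub (S T : Tens4) : dil (S - T) = dil S - dil T := by
  ext i j
  simp only [dil, Pi.sub_apply, sum_sub_distrib]

theorem muC_sub (S T : Tens4) : muC (S - T) = muC S - muC T := by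
  simp only [muC, voigt, dil, Pi.sub_apply, sum_sub_distrib]
  ring

theorem dil_dyad (A B : Tens2) : dil (dyad A B) = (∑ i, A i i) • B := by
  ext i j
  simp only [dil, dyad_apply, ← sum_mul, Pi.smul_apply, smul_eq_mul]

theorem muC_dyad_self (A : Tens2) :
    muC (dyad A A) = (2 * frobSq A - (∑ i, A i i) ^ 2) / 8 := by
  simp only [muC, voigt, dil, dyad_apply, frobSq, Fin.sum_univ_two]
  ring

theorem sum_devC_self (T : Tens4) : ∑ i, devC T i i = 0 := by
  simp only [devC, kdelta, Fin.sum_univ_two, if_true]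
  ring

theorem dil_eq_smul_kdelta_add_devC (T : Tens4) :
    dil T = (2 * kappaC T) • kdelta + devC T := by
  ext i j
  simp only [devC, kappaC, Pi.add_apply, Pi.smul_apply, smul_eq_mul]
  ring

/-- The elasticity tensor with shear modulus `m`, bulk modulus `κ`, deviatoric dilatation `D` and
no harmonic part: what is left of `C` once `H(C)` is removed. -/
def isoDil (m κ : ℝ) (D : Tens2) : Tens4 :=
  (2 * m) • Jten + κ • dyad kdelta kdelta + (1 / 2 : ℝ) • (dyad kdelta D + dyad D kdelta)

theorem isoDil_apply (m κ : ℝ) (D : Tens2) (i j k l : Fin 2) :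
    isoDil m κ D i j k l = 2 * m * Jten i j k l + κ * kdelta i j * kdelta k l
      + (kdelta i j * D k l + D i j * kdelta k l) / 2 := by
  simp only [isoDil, Pi.add_apply, Pi.smul_apply, dyad_apply, smul_eq_mul]
  ring

theorem dil_isoDil (m κ : ℝ) {D : Tens2} (hD : ∑ i, D i i = 0) :
    dil (isoDil m κ D) = (2 * κ) • kdelta + D := by
  rw [Fin.sum_univ_two] at hD
  ext i j
  simp only [dil, isoDil_apply, Jten, Fin.sum_univ_two, Pi.add_apply, Pi.smul_apply, smul_eq_mul]
  fin_cases i <;> fin_cases j <;> simp [kdelta] <;> linarith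

theorem muC_isoDil (m κ : ℝ) (D : Tens2) : muC (isoDil m κ D) = m := by
  simp only [muC, voigt, dil, isoDil_apply, Jten, kdelta, Fin.sum_univ_two, ↓reduceIte,
    zero_ne_one, one_ne_zero]
  ring

theorem harmC_eq_sub_isoDil (T : Tens4) :
    harmC T = T - isoDil (muC T) (kappaC T) (devC T) := by
  ext i j k l
  simp only [harmC, Pi.sub_apply, isoDil_apply]
  ring

theorem dil_harmC (T : Tens4) : dil (harmC T) = 0 := by
  rw [harmC_eq_sub_isoDil, dil_sub, dil_isoDil _ _ (sum_devC_self T),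
    ← dil_eq_smul_kdelta_add_devC, sub_self]

theorem muC_harmC (T : Tens4) : muC (harmC T) = 0 := by
  rw [harmC_eq_sub_isoDil, muC_sub, muC_isoDil, sub_self]

theorem harmC_dyad_self {D : Tens2} (hD : ∑ i, D i i = 0) :
    harmC (dyad D D) = dyad D D - (frobSq D / 2) • Jten := by
  have hdil : dil (dyad D D) = 0 := by rw [dil_dyad, hD, zero_smul]
  have hmu : muC (dyad D D) = frobSq D / 4 := by rw [muC_dyad_self, hD]; ring
  ext i j k l
  simp only [harmC, kappaC, devC, hdil, hmu, Pi.sub_apply, Pi.smul_apply, Pi.zero_apply,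
    sum_const_zero, smul_eq_mul]
  ring

namespace IsElas

variable {S T : Tens4}

theorem add (hS : IsElas S) (hT : IsElas T) : IsElas (S + T) :=
  ⟨fun i j k l => congrArg₂ (· + ·) (hS.1 i j k l) (hT.1 i j k l),
    fun i j k l => congrArg₂ (· + ·) (hS.2.1 i j k l) (hT.2.1 i j k l),
    fun i j k l => congrArg₂ (· + ·) (hS.2.2 i j k l) (hT.2.2 i j k l)⟩

theorem smul (hT : IsElas T) (c : ℝ) : IsElas (c • T) :=
  ⟨fun i j k l => congrArg (c * ·) (hT.1 i j k l),
    fun i j k l => congrArg (c * ·) (hT.2.1 i j k l),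
    fun i j k l => congrArg (c * ·) (hT.2.2 i j k l)⟩

theorem sub (hS : IsElas S) (hT : IsElas T) : IsElas (S - T) := by
  simpa only [neg_one_smul, ← sub_eq_add_neg] using hS.add (hT.smul (-1))

theorem devC_comm (hT : IsElas T) (i j : Fin 2) : devC T i j = devC T j i := by
  simp only [devC, dil, hT.2.1 _ _ i j, kdelta_comm i j]

theorem tensInner_Jten (hT : IsElas T) : tensInner T Jten = 4 * muC T := by
  simp only [tensInner_apply, Jten, muC, voigt, dil, kdelta, Fin.sum_univ_two, ↓reduceIte,
    zero_ne_one, one_ne_zero, hT.1 1 0, hT.2.1 _ _ 1 0]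
  ring

theorem tensInner_dyad_comm (hT : IsElas T) (A B : Tens2) :
    tensInner T (dyad A B) = tensInner T (dyad B A) := by
  have hswap : ∑ p : Fin 2 × Fin 2, ∑ q : Fin 2 × Fin 2,
        T p.1 p.2 q.1 q.2 * (A p.1 p.2 * B q.1 q.2)
      = ∑ q : Fin 2 × Fin 2, ∑ p : Fin 2 × Fin 2,
        T q.1 q.2 p.1 p.2 * (B q.1 q.2 * A p.1 p.2) := by
    rw [sum_comm]
    exact sum_congr rfl fun q _ => sum_congr rfl fun p _ => by rw [hT.2.2, mul_comm (A _ _)]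
  simpa only [tensInner_apply, dyad_apply, Fintype.sum_prod_type] using hswap

theorem tensInner_dyad_smul_kdelta_add_self (hT : IsElas T) (hdil : dil T = 0) (c : ℝ)
    (A : Tens2) :
    tensInner T (dyad (c • kdelta + A) (c • kdelta + A)) = tensInner T (dyad A A) := by
  have hleft (B : Tens2) : tensInner T (dyad kdelta B) = 0 := by
    simp only [tensInner_dyad_kdelta_left, hdil, Pi.zero_apply, zero_mul, sum_const_zero]
  have hright (B : Tens2) : tensInner T (dyad B kdelta) = 0 := by
    rw [hT.tensInner_dyad_comm, hleft]
  simp only [map_add, map_smul, LinearMap.add_apply, LinearMap.smul_apply, hleft, hright,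
    smul_zero, zero_add]

end IsElas

theorem isElas_Jten : IsElas Jten := by
  refine ⟨fun i j k l => ?_, fun i j k l => ?_, fun i j k l => ?_⟩
  · simp only [Jten, kdelta_comm i j]; ring
  · simp only [Jten, kdelta_comm k l]; ring
  · simp only [Jten, kdelta_comm k i, kdelta_comm k j, kdelta_comm l i, kdelta_comm l j]; ring

theorem isElas_dyad_self {D : Tens2} (hD : ∀ i j, D i j = D j i) : IsElas (dyad D D) :=
  ⟨fun i j k l => congrArg (· * D k l) (hD i j), fun i j k l => congrArg (D i j * ·) (hD k l),
    fun i j k l => mul_comm (D i j) (D k l)⟩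

theorem isElas_isoDil (m κ : ℝ) {D : Tens2} (hD : ∀ i j, D i j = D j i) :
    IsElas (isoDil m κ D) := by
  have hmixed : IsElas (dyad kdelta D + dyad D kdelta) := by
    -- polarization of `isElas_dyad_self`
    have h := (isElas_dyad_self (D := kdelta + D)
      fun i j => congrArg₂ (· + ·) (kdelta_comm i j) (hD i j)).sub
        ((isElas_dyad_self kdelta_comm).add (isElas_dyad_self hD))
    convert h using 1
    simp only [map_add, LinearMap.add_apply]
    abel
  exact ((isElas_Jten.smul _).add ((isElas_dyad_self kdelta_comm).smul _)).add (hmixed.smul _)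

theorem IsElas.harmC {T : Tens4} (hT : IsElas T) : IsElas (harmC T) := by
  rw [harmC_eq_sub_isoDil]
  exact hT.sub (isElas_isoDil _ _ hT.devC_comm)

theorem tensInner_harmC_dyad_dil (C : Tens4) :
    tensInner (harmC C) (dyad (dil C) (dil C)) = K3 C := by
  simp only [tensInner_apply, dyad_apply, K3, mul_assoc, mul_left_comm]

theorem tensInner_harmC_harmC_dyad_self {T : Tens4} (hT : IsElas T) {D : Tens2}
    (hD : ∑ i, D i i = 0) :
    tensInner (harmC T) (harmC (dyad D D)) = tensInner (harmC T) (dyad D D) := by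
  rw [harmC_dyad_self hD, map_sub, map_smul, hT.harmC.tensInner_Jten, muC_harmC, mul_zero,
    smul_zero, sub_zero]

theorem tensInner_harmC_harmC_dyad_devC {C : Tens4} (hC : IsElas C) :
    tensInner (harmC C) (harmC (dyad (devC C) (devC C))) = K3 C := by
  rw [tensInner_harmC_harmC_dyad_self hC (sum_devC_self C), ← tensInner_harmC_dyad_dil,
    dil_eq_smul_kdelta_add_devC C, hC.harmC.tensInner_dyad_smul_kdelta_add_self (dil_harmC C)]

theorem tensInner_self_harmC_dyad_self {D : Tens2} (hsymm : ∀ i j, D i j = D j i)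
    (htr : ∑ i, D i i = 0) :
    tensInner (harmC (dyad D D)) (harmC (dyad D D)) = frobSq D ^ 2 / 2 := by
  have hDD := isElas_dyad_self hsymm
  rw [tensInner_harmC_harmC_dyad_self hDD htr, ← tensInner_isSymm.eq, harmC_dyad_self htr,
    map_sub, map_smul, tensInner_dyad_self, hDD.tensInner_Jten, muC_dyad_self, htr, smul_eq_mul]
  ring

theorem tensInner_self_harmC_sub_proj {C : Tens4} (hC : IsElas C) (hd : devC C ≠ 0) :
    let R := harmC C - (2 * K3 C / I2 C ^ 2) • harmC (dyad (devC C) (devC C))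
    tensInner R R = (J2 C * I2 C ^ 2 - 2 * K3 C ^ 2) / I2 C ^ 2 := by
  set P := harmC (dyad (devC C) (devC C))
  have hI : I2 C ≠ 0 := (I2_pos hd).ne'
  have hHH : tensInner (harmC C) (harmC C) = J2 C := tensInner_self _
  have hHP : tensInner (harmC C) P = K3 C := tensInner_harmC_harmC_dyad_devC hC
  have hPP : tensInner P P = I2 C ^ 2 / 2 :=
    tensInner_self_harmC_dyad_self hC.devC_comm (sum_devC_self C)
  have hPP0 : tensInner P P ≠ 0 := by rw [hPP]; positivity
  have hcoeff : 2 * K3 C / I2 C ^ 2 = tensInner (harmC C) P / tensInner P P := by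
    rw [hHP, hPP]; field_simp
  intro R
  calc tensInner R R
      = tensInner (harmC C) (harmC C) - tensInner (harmC C) P ^ 2 / tensInner P P := by
        simp only [R, hcoeff, bilin_self_sub_proj tensInner_isSymm _ hPP0]
    _ = (J2 C * I2 C ^ 2 - 2 * K3 C ^ 2) / I2 C ^ 2 := by
        rw [hHH, hHP, hPP]; field_simp

/-- The action of a `2 × 2` matrix on second-order tensors, `g A gᵀ` in matrix notation. -/
def act₂ (g : Matrix (Fin 2) (Fin 2) ℝ) (A : Tens2) (i j : Fin 2) : ℝ :=
  ∑ p, ∑ q, g i p * g j q * A p q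

theorem act_add (g : Matrix (Fin 2) (Fin 2) ℝ) (S T : Tens4) :
    act g (S + T) = act g S + act g T := by
  ext i j k l
  simp only [act, Pi.add_apply, mul_add, sum_add_distrib]

theorem act_smul (g : Matrix (Fin 2) (Fin 2) ℝ) (c : ℝ) (T : Tens4) :
    act g (c • T) = c • act g T := by
  ext i j k l
  simp only [act, Pi.smul_apply, smul_eq_mul, mul_left_comm _ c, mul_sum]

theorem act_dyad (g : Matrix (Fin 2) (Fin 2) ℝ) (A B : Tens2) :
    act g (dyad A B) = dyad (act₂ g A) (act₂ g B) := by
  ext i j k l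
  simp only [act, act₂, dyad_apply, Fin.sum_univ_two]
  ring

theorem act₂_kdelta {g : Matrix (Fin 2) (Fin 2) ℝ} (hg : g * g.transpose = 1) :
    act₂ g kdelta = kdelta := by
  ext i j
  have h := congrFun (congrFun hg i) j
  simpa [Matrix.mul_apply, Matrix.one_apply, act₂, kdelta] using h

theorem act_Jten {g : Matrix (Fin 2) (Fin 2) ℝ} (hg : g * g.transpose = 1) :
    act g Jten = Jten := by
  have hJ (i j k l : Fin 2) : act g Jten i j k l =
      (act₂ g kdelta i k * act₂ g kdelta j l + act₂ g kdelta i l * act₂ g kdelta j k) / 2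
        - act₂ g kdelta i j * act₂ g kdelta k l / 2 := by
    simp only [act, act₂, Jten, kdelta, Fin.sum_univ_two, ↓reduceIte, zero_ne_one, one_ne_zero]
    ring
  ext i j k l
  rw [hJ, act₂_kdelta hg, Jten]

theorem rot_mul_transpose (θ : ℝ) : rot θ * (rot θ).transpose = 1 := by
  ext i j
  have h := Real.cos_sq_add_sin_sq θ
  fin_cases i <;> fin_cases j <;> simp [rot, Matrix.mul_apply, Fin.sum_univ_two] <;> linarith

theorem exists_act₂_rot_eq_zero {D : Tens2} (hD : ∀ i j, D i j = D j i) :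
    ∃ θ : ℝ, act₂ (rot θ) D 0 1 = 0 := by
  obtain ⟨φ, hφ⟩ := exists_mul_sin_add_mul_cos_eq_zero ((D 0 0 - D 1 1) / 2) (D 0 1)
  refine ⟨φ / 2, ?_⟩
  rw [← mul_div_cancel₀ φ (two_ne_zero' ℝ), Real.sin_two_mul, Real.cos_two_mul'] at hφ
  simp only [act₂, rot, Fin.sum_univ_two, hD 1 0, Matrix.of_apply, Matrix.cons_val_zero,
    Matrix.cons_val_one, Matrix.cons_val']
  linear_combination hφ

theorem isOrtho_linearCombination {D : Tens2} (hD : ∀ i j, D i j = D j i) (a b c e : ℝ) :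
    IsOrtho (a • Jten + b • dyad kdelta kdelta + c • (dyad kdelta D + dyad D kdelta)
      + e • dyad D D) := by
  obtain ⟨θ, hθ⟩ := exists_act₂_rot_eq_zero hD
  have hrot := rot_mul_transpose θ
  refine ⟨θ, ?_⟩
  simp only [act_add, act_smul, act_dyad, act_Jten hrot, act₂_kdelta hrot]
  simp [dyad_apply, hθ, Jten, kdelta]

theorem isOrtho_isoDil_add_smul_harmC_dyad_self {D : Tens2} (hsymm : ∀ i j, D i j = D j i)
    (htr : ∑ i, D i i = 0) (m κ e : ℝ) :
    IsOrtho (isoDil m κ D + e • harmC (dyad D D)) := by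
  convert isOrtho_linearCombination hsymm (2 * m - e * (frobSq D / 2)) κ (1 / 2) e using 1
  rw [isoDil, harmC_dyad_self htr]
  module

/-- The orthotropic reconstruction `C₀` of a 2D elasticity tensor
`C` (with `d'(C) ≠ 0`) is an orthotropic elasticity tensor at squared distance
`(J₂ I₂² − 2K₃²)/I₂²` from `C`; hence the distance from `C` to the orthotropic
symmetry class is at most `Δ = √(J₂ I₂² − 2K₃²)/I₂`. -/
theorem upper_bound_distance_to_orthotropy (C : Tens4) (hC : IsElas C)
    (hd : devC C ≠ 0) :
    let C₀ : Tens4 := fun i j k l =>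
      2 * muC C * Jten i j k l + kappaC C * kdelta i j * kdelta k l
        + (kdelta i j * devC C k l + devC C i j * kdelta k l) / 2
        + 2 * K3 C / (I2 C) ^ 2
          * (devC C i j * devC C k l - I2 C / 2 * Jten i j k l)
    IsElas C₀ ∧ IsOrtho C₀ ∧
      (∑ i, ∑ j, ∑ k, ∑ l, (C i j k l - C₀ i j k l) ^ 2)
        = (J2 C * (I2 C) ^ 2 - 2 * (K3 C) ^ 2) / (I2 C) ^ 2 ∧
      sInf {r : ℝ | ∃ Q : Tens4, IsElas Q ∧ IsOrtho Q ∧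
          r = Real.sqrt (∑ i, ∑ j, ∑ k, ∑ l, (C i j k l - Q i j k l) ^ 2)}
        ≤ Real.sqrt (J2 C * (I2 C) ^ 2 - 2 * (K3 C) ^ 2) / I2 C := by
  intro C₀
  have hsymm := hC.devC_comm
  have htr := sum_devC_self C
  have hC₀ : C₀ = isoDil (muC C) (kappaC C) (devC C)
      + (2 * K3 C / I2 C ^ 2) • harmC (dyad (devC C) (devC C)) := by
    rw [harmC_dyad_self htr]
    ext i j k l
    simp only [Pi.add_apply, Pi.smul_apply, Pi.sub_apply, isoDil_apply, dyad_apply, smul_eq_mul]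
    rfl
  have hElas : IsElas C₀ := hC₀ ▸
    (isElas_isoDil _ _ hsymm).add ((isElas_dyad_self hsymm).harmC.smul _)
  have hOrtho : IsOrtho C₀ := hC₀ ▸ isOrtho_isoDil_add_smul_harmC_dyad_self hsymm htr _ _ _
  have hDist : ∑ i, ∑ j, ∑ k, ∑ l, (C i j k l - C₀ i j k l) ^ 2
      = (J2 C * I2 C ^ 2 - 2 * K3 C ^ 2) / I2 C ^ 2 := by
    rw [← tensInner_self_harmC_sub_proj hC hd, harmC_eq_sub_isoDil C, sub_sub, ← hC₀]
    exact (tensInner_self (C - C₀)).symm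
  refine ⟨hElas, hOrtho, hDist, csInf_le ⟨0, ?_⟩ ⟨C₀, hElas, hOrtho, ?_⟩⟩
  · rintro _ ⟨Q, -, -, rfl⟩
    exact Real.sqrt_nonneg _
  · rw [hDist, Real.sqrt_div' _ (sq_nonneg _), Real.sqrt_sq (I2_pos hd).le]
end
end
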